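/- There exists a basis e_1, …, e_n of V coordinated with the flag 𝓕 (i.e., for each j, the set of those e_i lying in V_j is a basis of V_j) such that the Gram matrix (b(e_i, e_j)) is block diagonal of the form diag(M_0, …, M_0, M_1, …, M_1, 1_s), where M_0 = [[0,1],[1,0]], M_1 = [[0,1],[1,1]], 1_s is the s×s identity matrix, the number of blocks M_1 equals Σ_{1≤q<r} n_qr·n_rq^1, and s = Σ_{q≥1} n_qq·n_qq^1. -/

import Mathlib

open Module

/-- The orthogonal complement of a subspace `L` with respect to a bilinear form `b`:
`L^⊥ = {v ∈ V | b(v,w) = 0 for all w ∈ L}`. -/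
def perp {K V : Type*} [Field K] [AddCommGroup V] [Module K V]
    (B : V →ₗ[K] V →ₗ[K] K) (L : Submodule K V) : Submodule K V where
  carrier := {v | ∀ w ∈ L, B v w = 0}
  add_mem' := by
    intro a b ha hb w hw
    simp [map_add, LinearMap.add_apply, ha w hw, hb w hw]
  zero_mem' := by
    intro w hw
    simp
  smul_mem' := by
    intro c a ha w hw
    simp [map_smul, LinearMap.smul_apply, ha w hw]

/-- `n_qr`: the dimension of the quotient
`Φ_qr = (V_q ∩ V_{r−1}^⊥)/(V_q ∩ V_r^⊥ + V_{q−1} ∩ V_{r−1}^⊥)`. -/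
noncomputable def nqr {K V : Type*} [Field K] [AddCommGroup V] [Module K V]
    (B : V →ₗ[K] V →ₗ[K] K) (Vf : ℕ → Submodule K V) (q r : ℕ) : ℕ :=
  Module.finrank K
    (↥(Vf q ⊓ perp B (Vf (r - 1))) ⧸
      Submodule.comap (Vf q ⊓ perp B (Vf (r - 1))).subtype
        (Vf q ⊓ perp B (Vf r) ⊔ Vf (q - 1) ⊓ perp B (Vf (r - 1))))

/-- `n_qr^1 = n_qr − dim Φ_qr^0`, where `Φ_qr^0` is the image of
`V_q ∩ V_{r−1}^⊥ ∩ V^0` under the canonical projection onto `Φ_qr`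
(`V0` is the subspace of isotropic vectors `{v | b(v,v) = 0}`). -/
noncomputable def nqr1 {K V : Type*} [Field K] [AddCommGroup V] [Module K V]
    (B : V →ₗ[K] V →ₗ[K] K) (Vf : ℕ → Submodule K V) (V0 : Submodule K V)
    (q r : ℕ) : ℕ :=
  nqr B Vf q r -
    Module.finrank K
      ↥(Submodule.map
        (Submodule.mkQ (Submodule.comap (Vf q ⊓ perp B (Vf (r - 1))).subtype
          (Vf q ⊓ perp B (Vf r) ⊔ Vf (q - 1) ⊓ perp B (Vf (r - 1)))))
        (Submodule.comap (Vf q ⊓ perp B (Vf (r - 1))).subtype V0))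
/-- The entries of the block-diagonal matrix diag(M₀,…,M₀,M₁,…,M₁,1ₛ)
with k blocks M₀ = [[0,1],[1,0]] (occupying indices < 2k),
t blocks M₁ = [[0,1],[1,1]] (occupying indices in [2k, 2k+2t)),
and an identity block on the remaining indices. -/
def gramPattern (K : Type*) [Field K] (k t : ℕ) {n : ℕ} (i j : Fin n) : K :=
  if i.val < 2 * k then
    (if (j.val = i.val + 1 ∧ i.val % 2 = 0) ∨ (i.val = j.val + 1 ∧ j.val % 2 = 0)
      then 1 else 0)
  else if i.val < 2 * k + 2 * t then
    (if (i = j ∧ i.val % 2 = 1) ∨ (j.val = i.val + 1 ∧ i.val % 2 = 0) ∨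
        (i.val = j.val + 1 ∧ j.val % 2 = 0) then 1 else 0)
  else if i = j then 1 else 0

/-!
In characteristic `2` over a perfect field, `b(v, v) = l(v)²` for a linear functional `l`, so `V⁰`
is the kernel of `l` and `n_ab¹` is `1` or `0` according to whether `l` induces a nonzero
functional on the cell `Φ_ab`; in the first case call `Φ_ab` a corner.

The cells `Φ_qr` and `Φ_rq` are dual to each other. As long as some cell with `q ≤ r` is nonzero,
one can therefore choose vectors in `Φ_qr` and `Φ_rq` spanning a plane with Gram matrix `M₀` or
`M₁`, or a line when `q = r`, and split it off orthogonally from the whole flag. The type of the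
block has to be the one dictated by the corners of the original flag, so corners must survive each
splitting. A block inside `ker l` does not affect them; it exists whenever `Φ_qr ≠ 0` and `Φ_rq`
is not a corner. When only corners are left, a corner can be destroyed only by a block in its own
cell, and the block can be chosen so that this happens only if it exhausts the cell.

In the resulting basis each vector has a degree, the step of the flag where it appears, and a
codegree, the degree of its partner. The subspaces `V_a ∩ V_c^⊥` are spanned by basis vectors, so
`n_qr` counts those of degree `q` and codegree `r`.
-/

section PerfectCharTwo

variable {K V : Type*} [Field K] [AddCommGroup V] [Module K V]

lemma exists_linear_sq_eq [CharP K 2] [PerfectField K] {B : V →ₗ[K] V →ₗ[K] K}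
    (hB : ∀ u v, B u v = B v u) : ∃ l : V →ₗ[K] K, ∀ v, B v v = l v ^ 2 := by
  have : ExpChar K 2 := ExpChar.prime Nat.prime_two
  have : PerfectRing K 2 := PerfectField.toPerfectRing 2
  have map_diag_add (u v : V) : B (u + v) (u + v) = B u u + B v v := by
    simp only [map_add, LinearMap.add_apply, hB v u]
    linear_combination B u v * CharTwo.two_eq_zero (R := K)
  have map_diag_smul (c : K) (v : V) : B (c • v) (c • v) = c ^ 2 * B v v := by
    simp [sq, mul_assoc]
  exact ⟨{
      toFun := fun v ↦ (frobeniusEquiv K 2).symm (B v v)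
      map_add' := fun u v ↦ by rw [map_diag_add, map_add]
      map_smul' := fun c v ↦ by
        rw [map_diag_smul, map_mul, map_pow, frobeniusEquiv_symm_pow_p, RingHom.id_apply,
          smul_eq_mul] },
    fun v ↦ (frobeniusEquiv_symm_pow_p K 2 _).symm⟩

end PerfectCharTwo

section Perp

variable {K V : Type*} [Field K] [AddCommGroup V] [Module K V] {B : V →ₗ[K] V →ₗ[K] K}
  {L M : Submodule K V}

lemma perp_anti (h : L ≤ M) : perp B M ≤ perp B L := fun _ hx w hw ↦ hx w (h hw)

lemma perp_sup : perp B (L ⊔ M) = perp B L ⊓ perp B M := by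
  refine le_antisymm (le_inf (perp_anti le_sup_left) (perp_anti le_sup_right)) ?_
  rintro x ⟨hL, hM⟩ w hw
  obtain ⟨a, ha, b, hb, rfl⟩ := Submodule.mem_sup.1 hw
  rw [map_add, hL a ha, hM b hb, add_zero]

lemma mem_perp_span {s : Set V} {x : V} :
    x ∈ perp B (Submodule.span K s) ↔ ∀ y ∈ s, B x y = 0 :=
  Submodule.span_le (p := LinearMap.ker (B x))

variable [FiniteDimensional K V]

lemma perp_perp (hB : ∀ u v, B u v = B v u) (hnd : ∀ v, (∀ w, B v w = 0) → v = 0)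
    (L : Submodule K V) : perp B (perp B L) = L := by
  have perp_eq_orthogonal (M : Submodule K V) :
      perp B M = LinearMap.BilinForm.orthogonal B M := by
    ext x
    exact forall₂_congr fun w _ ↦ by rw [hB]
  have refl : LinearMap.BilinForm.IsRefl B := fun x y h ↦ (hB y x).trans h
  have nondegenerate : LinearMap.BilinForm.Nondegenerate B :=
    ⟨hnd, fun v h ↦ hnd v fun w ↦ (hB v w).trans (h w)⟩
  rw [perp_eq_orthogonal, perp_eq_orthogonal,
    LinearMap.BilinForm.orthogonal_orthogonal nondegenerate refl]

lemma perp_inf_perp (hB : ∀ u v, B u v = B v u) (hnd : ∀ v, (∀ w, B v w = 0) → v = 0)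
    (L M : Submodule K V) : perp B (L ⊓ perp B M) = perp B L ⊔ M := by
  rw [← perp_perp hB hnd (perp B L ⊔ M), perp_sup, perp_perp hB hnd]

end Perp

section Cells

variable {K V : Type*} [Field K] [AddCommGroup V] [Module K V]

/-- The numerator `V_a ∩ V_{b-1}^⊥` of the cell `Φ_ab` of a flag. -/
def cellTop (B : V →ₗ[K] V →ₗ[K] K) (F : ℕ → Submodule K V) (a b : ℕ) : Submodule K V :=
  F a ⊓ perp B (F (b - 1))

/-- The denominator `V_a ∩ V_b^⊥ + V_{a-1} ∩ V_{b-1}^⊥` of the cell `Φ_ab` of a flag. -/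
def cellBot (B : V →ₗ[K] V →ₗ[K] K) (F : ℕ → Submodule K V) (a b : ℕ) : Submodule K V :=
  F a ⊓ perp B (F b) ⊔ F (a - 1) ⊓ perp B (F (b - 1))

/-- The cell `Φ_ab` is a corner for a functional `l` if `l` induces a nonzero functional on it.
For `l v = √(b v v)` this says `n_ab^1 = 1`; otherwise `n_ab^1 = 0`. -/
def IsCornerCell (B : V →ₗ[K] V →ₗ[K] K) (l : V →ₗ[K] K) (F : ℕ → Submodule K V) (a b : ℕ) :
    Prop :=
  cellBot B F a b ≤ LinearMap.ker l ∧ ¬ cellTop B F a b ≤ LinearMap.ker l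

variable {B : V →ₗ[K] V →ₗ[K] K} {F : ℕ → Submodule K V} {l : V →ₗ[K] K} {a b c d : ℕ} {x y : V}

lemma apply_eq_zero_of_mem_cellTop (hF : Monotone F) (hx : x ∈ cellTop B F a b) (hy : y ∈ F c)
    (hcb : c < b) : B x y = 0 :=
  hx.2 y (hF (Nat.le_sub_one_of_lt hcb) hy)

lemma cellTop_mono (hF : Monotone F) (hac : a ≤ c) (hdb : d ≤ b) :
    cellTop B F a b ≤ cellTop B F c d :=
  inf_le_inf (hF hac) (perp_anti (hF (Nat.sub_le_sub_right hdb 1)))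

lemma cellBot_le_cellTop (hF : Monotone F) : cellBot B F a b ≤ cellTop B F a b :=
  sup_le (inf_le_inf_left _ (perp_anti (hF (Nat.sub_le _ _))))
    (inf_le_inf_right _ (hF (Nat.sub_le _ _)))

lemma cellTop_le_cellBot (hF : Monotone F) (hac : a ≤ c) (hdb : d ≤ b) (hne : a < c ∨ d < b) :
    cellTop B F a b ≤ cellBot B F c d := by
  rcases hne with hac' | hdb'
  · refine le_sup_of_le_right (inf_le_inf (hF (Nat.le_sub_one_of_lt hac')) ?_)
    exact perp_anti (hF (Nat.sub_le_sub_right hdb 1))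
  · exact le_sup_of_le_left (inf_le_inf (hF hac) (perp_anti (hF (Nat.le_sub_one_of_lt hdb'))))

lemma apply_cellBot_eq_zero (hB : ∀ u v, B u v = B v u) (hx : x ∈ cellTop B F a b)
    (hy : y ∈ cellBot B F b a) : B x y = 0 := by
  obtain ⟨u, hu, w, hw, rfl⟩ := Submodule.mem_sup.1 hy
  rw [map_add, hx.2 w hw.1, hB, hu.2 x hx.1, add_zero]

lemma cellBot_self_le_ker (hl : ∀ v, B v v = l v ^ 2) (q : ℕ) :
    cellBot B F q q ≤ LinearMap.ker l :=
  have isotropic_le (j : ℕ) : F j ⊓ perp B (F j) ≤ LinearMap.ker l := fun x hx ↦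
    pow_eq_zero_iff two_ne_zero |>.1 ((hl x).symm.trans (hx.2 x hx.1))
  sup_le (isotropic_le q) (isotropic_le (q - 1))

lemma exists_nonzero_cell (hbot : F 0 = ⊥) (hF : Monotone F) {N : ℕ}
    (hrad : Disjoint (F N) (perp B (F N))) (hN : F N ≠ ⊥) :
    ∃ q r, q ≤ r ∧ ¬ cellTop B F q r ≤ cellBot B F q r := by
  classical
  have exists_ne_bot : ∃ q, F q ≠ ⊥ := ⟨N, hN⟩
  obtain ⟨q, hq, eq_bot⟩ : ∃ q, F q ≠ ⊥ ∧ ∀ m < q, F m = ⊥ :=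
    ⟨Nat.find exists_ne_bot, Nat.find_spec exists_ne_bot, fun m hm ↦
      not_not.1 (Nat.find_min exists_ne_bot hm)⟩
  have hq_pos : q ≠ 0 := by rintro rfl; exact hq hbot
  have hqN : q ≤ N := not_lt.1 fun h ↦ hN (eq_bot N h)
  have exists_not_le : ∃ r, ¬ F q ≤ perp B (F r) :=
    ⟨N, fun h ↦ hq (le_bot_iff.1 (hrad (hF hqN) h))⟩
  obtain ⟨r, hr, le_perp⟩ : ∃ r, ¬ F q ≤ perp B (F r) ∧ ∀ m < r, F q ≤ perp B (F m) :=
    ⟨Nat.find exists_not_le, Nat.find_spec exists_not_le, fun m hm ↦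
      not_not.1 (Nat.find_min exists_not_le hm)⟩
  have le_perp_bot : F q ≤ perp B ⊥ := fun x _ w hw ↦ by rw [(Submodule.mem_bot K).1 hw, map_zero]
  have hqr : q ≤ r := not_lt.1 fun h ↦ hr (eq_bot r h ▸ le_perp_bot)
  refine ⟨q, r, hqr, fun h ↦ hr fun x hx ↦ ?_⟩
  have hx' : x ∈ cellBot B F q r := h ⟨hx, le_perp (r - 1) (by omega) hx⟩
  rw [cellBot, eq_bot (q - 1) (by omega), bot_inf_eq, sup_bot_eq] at hx'
  exact hx'.2

lemma exists_pairing_eq_one [FiniteDimensional K V] (hB : ∀ u v, B u v = B v u)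
    (hnd : ∀ v, (∀ w, B v w = 0) → v = 0) (hF : Monotone F)
    (hx : x ∈ cellTop B F a b) (hx' : x ∉ cellBot B F a b) :
    ∃ y ∈ cellTop B F b a, B x y = 1 := by
  obtain ⟨y, hy, hxy⟩ : ∃ y ∈ cellTop B F b a, B x y ≠ 0 := by
    by_contra! h
    have hx_perp : x ∈ perp B (F b) ⊔ F (a - 1) := perp_inf_perp hB hnd (F b) (F (a - 1)) ▸ h
    obtain ⟨u, hu, w, hw, rfl⟩ := Submodule.mem_sup.1 hx_perp
    refine hx' (Submodule.add_mem_sup ⟨?_, hu⟩ ⟨hw, ?_⟩)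
    · exact ((F a).add_mem_iff_left (hF (Nat.sub_le a 1) hw)).1 hx.1
    · exact ((perp B (F (b - 1))).add_mem_iff_right (perp_anti (hF (Nat.sub_le b 1)) hu)).1 hx.2
  exact ⟨(B x y)⁻¹ • y, Submodule.smul_mem _ _ hy, by
    rw [map_smul, smul_eq_mul, inv_mul_cancel₀ hxy]⟩

end Cells

section NormalSystems

variable {K V : Type*} [Field K] [AddCommGroup V] [Module K V]

open scoped Classical in
/-- A family of vectors in normal position: hyperbolic pairs `e p, f p` of degrees `q p ≤ r p`, and
unit vectors `g s` of degree `c s`. The pair `p` has Gram matrix `M₁` or `M₀` according to whether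
`C (r p) (q p)` holds, where `C` stands for the set of corner cells of a flag. -/
structure NormalSystem (B : V →ₗ[K] V →ₗ[K] K) (C : ℕ → ℕ → Prop) where
  Plane : Type
  Line : Type
  [fintypePlane : Fintype Plane]
  [fintypeLine : Fintype Line]
  (e f : Plane → V)
  (g : Line → V)
  (q r : Plane → ℕ)
  (c : Line → ℕ)
  q_le_r p : q p ≤ r p
  q_lt_r p : C (r p) (q p) → q p < r p
  corner_c s : C (c s) (c s)
  ee p p' : B (e p) (e p') = 0
  ef p p' : B (e p) (f p') = if p = p' then 1 else 0
  ff p p' : B (f p) (f p') = if p = p' ∧ C (r p) (q p) then 1 else 0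
  eg p s : B (e p) (g s) = 0
  fg p s : B (f p) (g s) = 0
  gg s s' : B (g s) (g s') = if s = s' then 1 else 0

namespace NormalSystem

attribute [instance] fintypePlane fintypeLine

variable {B : V →ₗ[K] V →ₗ[K] K} {C : ℕ → ℕ → Prop} {F : ℕ → Submodule K V}

/-- The indices of all vectors of a normal system, in the order `e`, `f`, `g`. -/
abbrev Index (D : NormalSystem B C) : Type := D.Plane ⊕ D.Plane ⊕ D.Line

/-- All vectors of a normal system as one family. -/
def vec (D : NormalSystem B C) : D.Index → V := Sum.elim D.e (Sum.elim D.f D.g)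

/-- The degree of a vector: the step of the flag at which it appears. -/
def deg (D : NormalSystem B C) : D.Index → ℕ := Sum.elim D.q (Sum.elim D.r D.c)

/-- The codegree of a vector, which is the degree of its partner. -/
def codeg (D : NormalSystem B C) : D.Index → ℕ := Sum.elim D.r (Sum.elim D.q D.c)

/-- The family dual to `vec` with respect to `B`. -/
def dualVec (D : NormalSystem B C) : D.Index → V :=
  Sum.elim (fun p ↦ D.f p - B (D.f p) (D.f p) • D.e p) (Sum.elim D.e D.g)

/-- The flag spanned by the vectors of degree at most `j`. -/
def flag (D : NormalSystem B C) (j : ℕ) : Submodule K V :=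
  Submodule.span K (D.vec '' {i | D.deg i ≤ j})

/-- Every vector of `D` lies in the cell of `F` prescribed by its degree and codegree. -/
def Fits (D : NormalSystem B C) (F : ℕ → Submodule K V) : Prop :=
  ∀ i, D.vec i ∈ cellTop B F (D.deg i) (D.codeg i)

variable (D : NormalSystem B C)

lemma vec_mem_flag {i : D.Index} {j : ℕ} (hij : D.deg i ≤ j) : D.vec i ∈ D.flag j :=
  Submodule.subset_span ⟨i, hij, rfl⟩

variable {D} in
lemma Fits.flag_le (hD : D.Fits F) (hF : Monotone F) (j : ℕ) : D.flag j ≤ F j := by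
  rw [flag, Submodule.span_le]
  rintro _ ⟨i, hi, rfl⟩
  exact hF hi (hD i).1

variable {D} in
lemma Fits.dualVec_mem (hD : D.Fits F) (hF : Monotone F) (i : D.Index) :
    D.dualVec i ∈ cellTop B F (D.codeg i) (D.deg i) := by
  rcases i with p | p | s
  · exact Submodule.sub_mem _ (hD (.inr (.inl p)))
      (Submodule.smul_mem _ _ (cellTop_mono hF (D.q_le_r p) (D.q_le_r p) (hD (.inl p))))
  · exact hD (.inl p)
  · exact hD (.inr (.inr s))

/-- Passing from `f` to `f - b(f,f) • e` does not change the spans because `deg e ≤ deg f`. -/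
lemma span_dualVec (j : ℕ) :
    Submodule.span K (D.dualVec '' {i | D.codeg i ≤ j}) = D.flag j := by
  refine le_antisymm (Submodule.span_le.2 ?_) (Submodule.span_le.2 ?_) <;>
    rintro _ ⟨p | p | s, hi, rfl⟩
  · exact Submodule.sub_mem _ (D.vec_mem_flag (i := .inr (.inl p)) hi)
      (Submodule.smul_mem _ _ (D.vec_mem_flag (i := .inl p) ((D.q_le_r p).trans hi)))
  · exact D.vec_mem_flag (i := .inl p) hi
  · exact D.vec_mem_flag (i := .inr (.inr s)) hi
  · exact Submodule.subset_span ⟨.inr (.inl p), hi, rfl⟩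
  · have he : D.e p ∈ Submodule.span K (D.dualVec '' {i | D.codeg i ≤ j}) :=
      Submodule.subset_span ⟨.inr (.inl p), (D.q_le_r p).trans hi, rfl⟩
    exact (Submodule.sub_mem_iff_left _ (Submodule.smul_mem _ _ he)).1
      (Submodule.subset_span ⟨.inl p, hi, rfl⟩)
  · exact Submodule.subset_span ⟨.inr (.inr s), hi, rfl⟩

lemma mem_perp_flag_iff_dualVec {x : V} {j : ℕ} :
    x ∈ perp B (D.flag j) ↔ ∀ i, D.codeg i ≤ j → B x (D.dualVec i) = 0 := by
  rw [← D.span_dualVec, mem_perp_span, Set.forall_mem_image]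
  rfl

open scoped Classical in
lemma apply_vec_dualVec (hB : ∀ u v, B u v = B v u) (i j : D.Index) :
    B (D.vec i) (D.dualVec j) = if i = j then 1 else 0 := by
  have fe (p p') : B (D.f p) (D.e p') = if p = p' then 1 else 0 := by
    rw [hB, D.ef]; simp only [eq_comm]
  have ge (s p) : B (D.g s) (D.e p) = 0 := by rw [hB, D.eg]
  have gf (s p) : B (D.g s) (D.f p) = 0 := by rw [hB, D.fg]
  rcases i with p | p | s <;> rcases j with p' | p' | s' <;>
    simp only [vec, dualVec, Sum.elim_inl, Sum.elim_inr, map_sub, map_smul, D.ee, D.ef, D.eg, fe,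
      D.ff, D.fg, ge, gf, D.gg, smul_zero, sub_zero, Sum.inl.injEq, Sum.inr.injEq, reduceCtorEq,
      if_false]
  obtain rfl | hp := eq_or_ne p p' <;> simp [*]

lemma linearIndependent_vec (hB : ∀ u v, B u v = B v u) : LinearIndependent K D.vec := by
  classical
  refine .of_pairwise_dual_eq_zero_one D.vec (fun i ↦ B.flip (D.dualVec i)) ?_ ?_
  · intro i j hij
    rw [LinearMap.flip_apply, D.apply_vec_dualVec hB, if_neg hij.symm]
  · intro i
    rw [LinearMap.flip_apply, D.apply_vec_dualVec hB, if_pos rfl]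

/-- The projection onto the orthogonal complement of the span of a normal system. -/
noncomputable def compl : V →ₗ[K] V :=
  LinearMap.id - ∑ i, (B.flip (D.dualVec i)).smulRight (D.vec i)

lemma compl_apply (x : V) : D.compl x = x - ∑ i, B x (D.dualVec i) • D.vec i := by
  simp [compl]

lemma apply_compl_dualVec (hB : ∀ u v, B u v = B v u) (x : V) (i : D.Index) :
    B (D.compl x) (D.dualVec i) = 0 := by
  classical
  simp [compl_apply, D.apply_vec_dualVec hB, -Fintype.sum_sum_type]

lemma apply_compl_vec (hB : ∀ u v, B u v = B v u) (x : V) (i : D.Index) :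
    B (D.compl x) (D.vec i) = 0 :=
  D.mem_perp_flag_iff_dualVec.2 (fun j _ ↦ D.apply_compl_dualVec hB x j) _ (D.vec_mem_flag le_rfl)

lemma apply_compl_comm (hB : ∀ u v, B u v = B v u) (x y : V) :
    B (D.compl x) y = B x (D.compl y) := by
  have sum_comm : ∑ i, B x (D.dualVec i) * B (D.vec i) y =
      ∑ i, B y (D.dualVec i) * B x (D.vec i) := by
    simp only [Fintype.sum_sum_type, vec, dualVec, Sum.elim_inl, Sum.elim_inr, ← add_assoc,
      ← Finset.sum_add_distrib, map_sub, map_smul, smul_eq_mul]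
    congr 1
    · refine Finset.sum_congr rfl fun p _ ↦ ?_
      rw [hB (D.e p) y, hB (D.f p) y]
      ring
    · exact Finset.sum_congr rfl fun s _ ↦ by rw [hB (D.g s) y, mul_comm]
  simp [compl_apply, sum_comm, -Fintype.sum_sum_type]

lemma compl_compl (hB : ∀ u v, B u v = B v u) (x : V) : D.compl (D.compl x) = D.compl x := by
  rw [compl_apply D (D.compl x)]
  simp [D.apply_compl_dualVec hB]

lemma compl_vec (hB : ∀ u v, B u v = B v u) (i : D.Index) : D.compl (D.vec i) = 0 := by
  classical
  simp [compl_apply, D.apply_vec_dualVec hB, -Fintype.sum_sum_type]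

variable {D}

lemma Fits.sub_compl_mem_flag (hD : D.Fits F) (hF : Monotone F) (hB : ∀ u v, B u v = B v u)
    {j : ℕ} {x : V} (hx : x ∈ F j) : x - D.compl x ∈ D.flag j := by
  rw [compl_apply, sub_sub_cancel]
  refine Submodule.sum_mem _ fun i _ ↦ ?_
  by_cases hij : D.deg i ≤ j
  · exact Submodule.smul_mem _ _ (D.vec_mem_flag hij)
  · rw [hB, apply_eq_zero_of_mem_cellTop hF (hD.dualVec_mem hF i) hx (not_le.1 hij), zero_smul]
    exact Submodule.zero_mem _

lemma Fits.compl_mem (hD : D.Fits F) (hF : Monotone F) (hB : ∀ u v, B u v = B v u)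
    {j : ℕ} {x : V} (hx : x ∈ F j) : D.compl x ∈ F j :=
  (Submodule.sub_mem_iff_right _ hx).1 (hD.flag_le hF j (hD.sub_compl_mem_flag hF hB hx))

lemma Fits.flag_sup_map_compl (hD : D.Fits F) (hF : Monotone F) (hB : ∀ u v, B u v = B v u)
    (j : ℕ) : D.flag j ⊔ (F j).map D.compl = F j := by
  refine le_antisymm (sup_le (hD.flag_le hF j) ?_) fun x hx ↦ ?_
  · rintro _ ⟨x, hx, rfl⟩
    exact hD.compl_mem hF hB hx
  · rw [← sub_add_cancel x (D.compl x)]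
    exact Submodule.add_mem_sup (hD.sub_compl_mem_flag hF hB hx) ⟨x, hx, rfl⟩

end NormalSystem

end NormalSystems

section FlagProjections

variable {K V : Type*} [Field K] [AddCommGroup V] [Module K V]

/-- An orthogonal projection which preserves every step of a flag. -/
structure IsFlagProjection (B : V →ₗ[K] V →ₗ[K] K) (F : ℕ → Submodule K V) (π : V →ₗ[K] V) :
    Prop where
  symm x y : B (π x) y = B x (π y)
  idem x : π (π x) = π x
  map_le j : (F j).map π ≤ F j

variable {B : V →ₗ[K] V →ₗ[K] K} {l : V →ₗ[K] K} {F : ℕ → Submodule K V} {π : V →ₗ[K] V}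

namespace IsFlagProjection

lemma map_inf_perp_le (hπ : IsFlagProjection B F π) (a b : ℕ) :
    (F a ⊓ perp B (F b)).map π ≤ F a ⊓ perp B (F b) := by
  rintro _ ⟨x, ⟨hx, hx_perp⟩, rfl⟩
  exact ⟨hπ.map_le a ⟨x, hx, rfl⟩, fun w hw ↦
    (hπ.symm x w).trans (hx_perp _ (hπ.map_le b ⟨w, hw, rfl⟩))⟩

lemma map_inf_perp_map (hπ : IsFlagProjection B F π) (a b : ℕ) :
    (F a).map π ⊓ perp B ((F b).map π) = (F a ⊓ perp B (F b)).map π := by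
  apply le_antisymm
  · rintro _ ⟨⟨x, hx, rfl⟩, hx_perp⟩
    refine ⟨π x, ⟨hπ.map_le a ⟨x, hx, rfl⟩, fun w hw ↦ ?_⟩, hπ.idem x⟩
    rw [← hπ.idem, hπ.symm]
    exact hx_perp _ ⟨w, hw, rfl⟩
  · refine le_inf (Submodule.map_mono inf_le_left) ?_
    exact (hπ.map_inf_perp_le a b).trans (inf_le_right.trans (perp_anti (hπ.map_le b)))

lemma cellTop_map (hπ : IsFlagProjection B F π) (a b : ℕ) :
    cellTop B (fun j ↦ (F j).map π) a b = (cellTop B F a b).map π :=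
  hπ.map_inf_perp_map a (b - 1)

lemma cellBot_map (hπ : IsFlagProjection B F π) (a b : ℕ) :
    cellBot B (fun j ↦ (F j).map π) a b = (cellBot B F a b).map π := by
  rw [cellBot, cellBot, Submodule.map_sup, hπ.map_inf_perp_map, hπ.map_inf_perp_map]

lemma map_cellTop_le (hπ : IsFlagProjection B F π) (a b : ℕ) :
    (cellTop B F a b).map π ≤ cellTop B F a b :=
  hπ.map_inf_perp_le a (b - 1)

lemma map_cellBot_le (hπ : IsFlagProjection B F π) (a b : ℕ) :
    (cellBot B F a b).map π ≤ cellBot B F a b := by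
  rw [cellBot, Submodule.map_sup]
  exact sup_le_sup (hπ.map_inf_perp_le _ _) (hπ.map_inf_perp_le _ _)

lemma isCornerCell_map_iff (hπ : IsFlagProjection B F π) (a b : ℕ) :
    IsCornerCell B l (fun j ↦ (F j).map π) a b ↔
      (cellBot B F a b).map π ≤ LinearMap.ker l ∧ ¬ (cellTop B F a b).map π ≤ LinearMap.ker l := by
  rw [IsCornerCell, hπ.cellTop_map, hπ.cellBot_map]

lemma isCornerCell_map_iff_of_comp_eq (hπ : IsFlagProjection B F π) (hlπ : l ∘ₗ π = l) (a b : ℕ) :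
    IsCornerCell B l (fun j ↦ (F j).map π) a b ↔ IsCornerCell B l F a b := by
  rw [hπ.isCornerCell_map_iff, Submodule.map_le_iff_le_comap, Submodule.map_le_iff_le_comap,
    ← LinearMap.ker_comp, hlπ, IsCornerCell]

end IsFlagProjection

/-- The flags met in the inductive splitting: increasing chains `F` with nondegenerate top term
`F N` whose nonzero cells on or above the diagonal have their transposed corners prescribed
by `C`. -/
structure IsAdmissible (B : V →ₗ[K] V →ₗ[K] K) (l : V →ₗ[K] K) (N : ℕ) (C : ℕ → ℕ → Prop)
    (F : ℕ → Submodule K V) : Prop where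
  bot : F 0 = ⊥
  mono : Monotone F
  le_top j : F j ≤ F N
  disjoint_perp : Disjoint (F N) (perp B (F N))
  isCornerCell_iff q r : q ≤ r → ¬ cellTop B F q r ≤ cellBot B F q r →
    (IsCornerCell B l F r q ↔ C r q)

lemma IsAdmissible.of_eq_top {N : ℕ} (hbot : F 0 = ⊥) (hF : Monotone F) (hN : F N = ⊤)
    (hnd : ∀ v, (∀ w, B v w = 0) → v = 0) : IsAdmissible B l N (IsCornerCell B l F) F where
  bot := hbot
  mono := hF
  le_top _ := hN ▸ _root_.le_top
  disjoint_perp := by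
    rw [hN, disjoint_iff_inf_le, top_inf_eq]
    exact fun v hv ↦ hnd v fun w ↦ hv w Submodule.mem_top
  isCornerCell_iff _ _ _ _ := .rfl

lemma IsFlagProjection.isAdmissible_map {N : ℕ} {C : ℕ → ℕ → Prop} (hπ : IsFlagProjection B F π)
    (hF : IsAdmissible B l N C F)
    (hcorner : ∀ q r, q ≤ r → ¬ (cellTop B F q r).map π ≤ (cellBot B F q r).map π →
      (IsCornerCell B l (fun j ↦ (F j).map π) r q ↔ IsCornerCell B l F r q)) :
    IsAdmissible B l N C (fun j ↦ (F j).map π) where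
  bot := by rw [hF.bot, Submodule.map_bot]
  mono _ _ hjk := Submodule.map_mono (hF.mono hjk)
  le_top j := Submodule.map_mono (hF.le_top j)
  disjoint_perp := by
    rw [disjoint_iff, hπ.map_inf_perp_map, hF.disjoint_perp.eq_bot, Submodule.map_bot]
  isCornerCell_iff q r hqr hcell := by
    rw [hπ.cellTop_map, hπ.cellBot_map] at hcell
    rw [hcorner q r hqr hcell,
      hF.isCornerCell_iff q r hqr fun hle ↦ hcell (Submodule.map_mono hle)]

end FlagProjections

namespace NormalSystem

variable {K V : Type*} [Field K] [AddCommGroup V] [Module K V] {B : V →ₗ[K] V →ₗ[K] K}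
  {C : ℕ → ℕ → Prop} {F : ℕ → Submodule K V}

lemma Fits.isFlagProjection_compl {D : NormalSystem B C} (hD : D.Fits F) (hF : Monotone F)
    (hB : ∀ u v, B u v = B v u) : IsFlagProjection B F D.compl where
  symm := D.apply_compl_comm hB
  idem := D.compl_compl hB
  map_le j := by
    rintro _ ⟨x, hx, rfl⟩
    exact hD.compl_mem hF hB hx

lemma Fits.map_compl_lt {D : NormalSystem B C} [Nonempty D.Index] {N : ℕ} (hD : D.Fits F)
    (hF : Monotone F) (hN : ∀ j, F j ≤ F N) (hB : ∀ u v, B u v = B v u) :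
    (F N).map D.compl < F N := by
  obtain ⟨i⟩ := ‹Nonempty D.Index›
  refine lt_of_le_of_ne ((hD.isFlagProjection_compl hF hB).map_le N) fun heq ↦ ?_
  obtain ⟨x, -, hx⟩ : D.vec i ∈ (F N).map D.compl := heq.ge (hN _ (hD i).1)
  refine (D.linearIndependent_vec hB).ne_zero i ?_
  rw [← hx, ← D.compl_compl hB, hx, D.compl_vec hB]

/-- The normal system without vectors. -/
def empty (B : V →ₗ[K] V →ₗ[K] K) (C : ℕ → ℕ → Prop) : NormalSystem B C where
  Plane := Empty
  Line := Empty
  e := Empty.elim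
  f := Empty.elim
  g := Empty.elim
  q := Empty.elim
  r := Empty.elim
  c := Empty.elim
  q_le_r := nofun
  q_lt_r := nofun
  corner_c := nofun
  ee := nofun
  ef := nofun
  ff := nofun
  eg := nofun
  fg := nofun
  gg := nofun

lemma flag_empty (j : ℕ) : (empty B C).flag j = ⊥ :=
  Submodule.span_eq_bot.2 (by rintro _ ⟨(⟨⟨⟩⟩ | ⟨⟨⟩⟩ | ⟨⟨⟩⟩), -⟩)

open scoped Classical in
/-- The normal system consisting of a single plane spanned by `e` and `f`. -/
def plane (e f : V) (q r : ℕ) (hqr : q ≤ r) (hqr' : C r q → q < r) (hee : B e e = 0)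
    (hef : B e f = 1) (hff : B f f = if C r q then 1 else 0) : NormalSystem B C where
  Plane := Unit
  Line := Empty
  e _ := e
  f _ := f
  g := Empty.elim
  q _ := q
  r _ := r
  c := Empty.elim
  q_le_r _ := hqr
  q_lt_r _ := hqr'
  corner_c := nofun
  ee _ _ := hee
  ef _ _ := by rw [hef, if_pos rfl]
  ff _ _ := by simp [hff]
  eg _ := nofun
  fg _ := nofun
  gg := nofun

/-- The normal system consisting of a single line spanned by `w`. -/
def line (w : V) (q : ℕ) (hq : C q q) (hw : B w w = 1) : NormalSystem B C where
  Plane := Empty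
  Line := Unit
  e := Empty.elim
  f := Empty.elim
  g _ := w
  q := Empty.elim
  r := Empty.elim
  c _ := q
  q_le_r := nofun
  q_lt_r := nofun
  corner_c _ := hq
  ee := nofun
  ef := nofun
  ff := nofun
  eg := nofun
  fg := nofun
  gg _ _ := by rw [hw, if_pos rfl]

section Sum

variable (D D' : NormalSystem B C) (hB : ∀ u v, B u v = B v u)
  (h : ∀ i j, B (D.vec i) (D'.vec j) = 0)

open scoped Classical in
/-- The union of two mutually orthogonal normal systems. -/
def sum : NormalSystem B C where
  Plane := D.Plane ⊕ D'.Plane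
  Line := D.Line ⊕ D'.Line
  e := Sum.elim D.e D'.e
  f := Sum.elim D.f D'.f
  g := Sum.elim D.g D'.g
  q := Sum.elim D.q D'.q
  r := Sum.elim D.r D'.r
  c := Sum.elim D.c D'.c
  q_le_r := by rintro (p | p); exacts [D.q_le_r p, D'.q_le_r p]
  q_lt_r := by rintro (p | p); exacts [D.q_lt_r p, D'.q_lt_r p]
  corner_c := by rintro (s | s); exacts [D.corner_c s, D'.corner_c s]
  ee := by
    have orthogonal p p' : B (D.e p) (D'.e p') = 0 := h (.inl p) (.inl p')
    rintro (p | p) (p' | p') <;> simp [D.ee, D'.ee, orthogonal, hB (D'.e _) (D.e _)]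
  ef := by
    have orthogonal p p' : B (D.e p) (D'.f p') = 0 := h (.inl p) (.inr (.inl p'))
    have orthogonal' p p' : B (D.f p) (D'.e p') = 0 := h (.inr (.inl p)) (.inl p')
    rintro (p | p) (p' | p') <;>
      simp [D.ef, D'.ef, orthogonal, orthogonal', hB (D'.e _) (D.f _)]
  ff := by
    have orthogonal p p' : B (D.f p) (D'.f p') = 0 := h (.inr (.inl p)) (.inr (.inl p'))
    rintro (p | p) (p' | p') <;> simp [D.ff, D'.ff, orthogonal, hB (D'.f _) (D.f _)]
  eg := by
    have orthogonal p s : B (D.e p) (D'.g s) = 0 := h (.inl p) (.inr (.inr s))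
    have orthogonal' s p : B (D.g s) (D'.e p) = 0 := h (.inr (.inr s)) (.inl p)
    rintro (p | p) (s | s) <;> simp [D.eg, D'.eg, orthogonal, orthogonal', hB (D'.e _) (D.g _)]
  fg := by
    have orthogonal p s : B (D.f p) (D'.g s) = 0 := h (.inr (.inl p)) (.inr (.inr s))
    have orthogonal' s p : B (D.g s) (D'.f p) = 0 := h (.inr (.inr s)) (.inr (.inl p))
    rintro (p | p) (s | s) <;> simp [D.fg, D'.fg, orthogonal, orthogonal', hB (D'.f _) (D.g _)]
  gg := by
    have orthogonal s s' : B (D.g s) (D'.g s') = 0 := h (.inr (.inr s)) (.inr (.inr s'))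
    rintro (s | s) (s' | s') <;> simp [D.gg, D'.gg, orthogonal, hB (D'.g _) (D.g _)]

lemma flag_sum (j : ℕ) : (sum D D' hB h).flag j = D.flag j ⊔ D'.flag j := by
  have vec_mem {i} (hi : (sum D D' hB h).deg i ≤ j) := vec_mem_flag (sum D D' hB h) hi
  refine le_antisymm (Submodule.span_le.2 ?_)
    (sup_le (Submodule.span_le.2 ?_) (Submodule.span_le.2 ?_))
  · rintro _ ⟨(p | p) | (p | p) | (s | s), hi, rfl⟩
    exacts [Submodule.mem_sup_left (D.vec_mem_flag (i := .inl p) hi),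
      Submodule.mem_sup_right (D'.vec_mem_flag (i := .inl p) hi),
      Submodule.mem_sup_left (D.vec_mem_flag (i := .inr (.inl p)) hi),
      Submodule.mem_sup_right (D'.vec_mem_flag (i := .inr (.inl p)) hi),
      Submodule.mem_sup_left (D.vec_mem_flag (i := .inr (.inr s)) hi),
      Submodule.mem_sup_right (D'.vec_mem_flag (i := .inr (.inr s)) hi)]
  · rintro _ ⟨p | p | s, hi, rfl⟩
    exacts [vec_mem (i := .inl (Sum.inl p)) hi, vec_mem (i := .inr (.inl (Sum.inl p))) hi,
      vec_mem (i := .inr (.inr (Sum.inl s))) hi]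
  · rintro _ ⟨p | p | s, hi, rfl⟩
    exacts [vec_mem (i := .inl (Sum.inr p)) hi, vec_mem (i := .inr (.inl (Sum.inr p))) hi,
      vec_mem (i := .inr (.inr (Sum.inr s))) hi]

end Sum

end NormalSystem

section Splitting

variable {K V : Type*} [Field K] [AddCommGroup V] [Module K V] {B : V →ₗ[K] V →ₗ[K] K}
  {C : ℕ → ℕ → Prop} {F : ℕ → Submodule K V} {l : V →ₗ[K] K} {N q r : ℕ} {e f w x : V}

namespace NormalSystem

open scoped Classical in
lemma functional_compl_plane (hqr : q ≤ r) (hqr' : C r q → q < r) (hee : B e e = 0)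
    (hef : B e f = 1) (hff : B f f = if C r q then 1 else 0) (hle : l e = 0) (x : V) :
    l ((plane e f q r hqr hqr' hee hef hff).compl x) = l x - B x e * l f := by
  simp [compl_apply, plane, vec, dualVec, hle]

lemma functional_compl_line (hq : C q q) (hw : B w w = 1) (x : V) :
    l ((line w q hq hw).compl x) = l x - B x w * l w := by
  simp [compl_apply, line, vec, dualVec]

open scoped Classical in
lemma fits_plane (hqr : q ≤ r) (hqr' : C r q → q < r) (hee : B e e = 0) (hef : B e f = 1)
    (hff : B f f = if C r q then 1 else 0) (he : e ∈ cellTop B F q r) (hf : f ∈ cellTop B F r q) :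
    (plane e f q r hqr hqr' hee hef hff).Fits F := by
  rintro (_ | _ | s)
  exacts [he, hf, s.elim]

lemma fits_line (hq : C q q) (hw : B w w = 1) (hw' : w ∈ cellTop B F q q) :
    (line w q hq hw).Fits F := by
  rintro (p | p | _)
  exacts [p.elim, p.elim, hw']

end NormalSystem

lemma functional_eq_zero_of_mem_cellTop (hF : Monotone F) (hl : ∀ v, B v v = l v ^ 2)
    (hqr : q < r) (hx : x ∈ cellTop B F q r) : l x = 0 :=
  pow_eq_zero_iff two_ne_zero |>.1
    ((hl x).symm.trans (apply_eq_zero_of_mem_cellTop hF hx hx.1 hqr))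

section NonCorner

lemma functional_eq_zero_of_not_isCornerCell (hF : Monotone F) (hl : ∀ v, B v v = l v ^ 2)
    (hqr : q ≤ r) (hC : ¬ IsCornerCell B l F r q) (hx : x ∈ cellTop B F q r) : l x = 0 := by
  rcases hqr.lt_or_eq with hqr | rfl
  · exact functional_eq_zero_of_mem_cellTop hF hl hqr hx
  · by_contra hlx
    exact hC ⟨cellBot_self_le_ker hl q, fun hle ↦ hlx (hle hx)⟩

variable [FiniteDimensional K V]

/-- The value `l f` can be changed at will along the denominator of the cell, which does not affect
the pairing with `e`. -/
lemma exists_isotropic_pair (hB : ∀ u v, B u v = B v u) (hnd : ∀ v, (∀ w, B v w = 0) → v = 0)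
    (hF : Monotone F) (hcell : ¬ cellTop B F q r ≤ cellBot B F q r)
    (hC : ¬ IsCornerCell B l F r q) :
    ∃ e ∈ cellTop B F q r, ∃ f ∈ cellTop B F r q, B e f = 1 ∧ l f = 0 := by
  obtain ⟨e, he, he_bot⟩ := SetLike.not_le_iff_exists.1 hcell
  obtain ⟨f, hf, hef⟩ := exists_pairing_eq_one hB hnd hF he he_bot
  refine ⟨e, he, ?_⟩
  by_cases hbot : cellBot B F r q ≤ LinearMap.ker l
  · exact ⟨f, hf, hef, not_not.1 (fun h ↦ hC ⟨hbot, h⟩) hf⟩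
  · obtain ⟨y, hy, hly⟩ := SetLike.not_le_iff_exists.1 hbot
    refine ⟨f - (l f / l y) • y, Submodule.sub_mem _ hf
      (Submodule.smul_mem _ _ (cellBot_le_cellTop hF hy)), ?_, ?_⟩
    · rw [map_sub, map_smul, hef, apply_cellBot_eq_zero hB he hy, smul_zero, sub_zero]
    · rw [map_sub, map_smul, smul_eq_mul, div_mul_cancel₀ _ hly, sub_self]

lemma IsAdmissible.exists_block_of_not_isCornerCell (hF : IsAdmissible B l N C F)
    (hB : ∀ u v, B u v = B v u) (hnd : ∀ v, (∀ w, B v w = 0) → v = 0)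
    (hl : ∀ v, B v v = l v ^ 2) (hqr : q ≤ r) (hcell : ¬ cellTop B F q r ≤ cellBot B F q r)
    (hcorner : ¬ IsCornerCell B l F r q) :
    ∃ D : NormalSystem B C, Nonempty D.Index ∧ D.Fits F ∧
      IsAdmissible B l N C (fun j ↦ (F j).map D.compl) := by
  classical
  obtain ⟨e, he, f, hf, hef, hlf⟩ := exists_isotropic_pair hB hnd hF.mono hcell hcorner
  have hle : l e = 0 := functional_eq_zero_of_not_isCornerCell hF.mono hl hqr hcorner he
  have hC : ¬ C r q := (hF.isCornerCell_iff q r hqr hcell).not.1 hcorner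
  have hee : B e e = 0 := by simp [hl, hle]
  have hff : B f f = if C r q then 1 else 0 := by simp [hl, hlf, hC]
  let D : NormalSystem B C := .plane e f q r hqr (fun h ↦ (hC h).elim) hee hef hff
  have fits : D.Fits F := NormalSystem.fits_plane hqr _ hee hef hff he hf
  have comp_compl : l ∘ₗ D.compl = l := LinearMap.ext fun x ↦ by
    rw [LinearMap.comp_apply, NormalSystem.functional_compl_plane hqr _ hee hef hff hle, hlf,
      mul_zero, sub_zero]
  have projection := fits.isFlagProjection_compl hF.mono hB
  exact ⟨D, ⟨.inl ()⟩, fits, projection.isAdmissible_map hF fun a b _ _ ↦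
    projection.isCornerCell_map_iff_of_comp_eq comp_compl b a⟩

end NonCorner

section Corner

/-- Vectors `e ∈ Φ_qr` and `f ∈ Φ_rq` spanning a block to be split off when `Φ_rq` is a corner: a
plane, or a line if `q = r`. The last field ensures that the corner survives the splitting,
unless the block exhausts the cell. -/
structure IsCornerPair (B : V →ₗ[K] V →ₗ[K] K) (l : V →ₗ[K] K) (F : ℕ → Submodule K V) (q r : ℕ)
    (e f : V) : Prop where
  left_mem : e ∈ cellTop B F q r
  right_mem : f ∈ cellTop B F r q
  pairing : B e f = 1
  functional_right : l f = 1
  eq_of_eq : q = r → e = f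
  survives_or_exhausts : (∃ x ∈ cellTop B F r q, B x e = 0 ∧ l x ≠ 0) ∨
    ∀ x ∈ cellTop B F q r, B x f = 0 → x ∈ cellBot B F q r

lemma IsCornerCell.exists_functional_eq_one (hC : IsCornerCell B l F q r) :
    ∃ x ∈ cellTop B F q r, l x = 1 := by
  obtain ⟨x, hx, hlx⟩ := SetLike.not_le_iff_exists.1 hC.2
  exact ⟨(l x)⁻¹ • x, Submodule.smul_mem _ _ hx, by
    rw [map_smul, smul_eq_mul, inv_mul_cancel₀ hlx]⟩

lemma IsCornerPair.isCornerCell_map {π : V →ₗ[K] V} {c d : ℕ} (h : IsCornerPair B l F q r e f)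
    (hB : ∀ u v, B u v = B v u) (hF : Monotone F) (hπ : IsFlagProjection B F π)
    (hlπ : ∀ x, l (π x) = l x - B x e) (hπf : ∀ x, B (π x) f = 0)
    (hcell : ¬ (cellTop B F c d).map π ≤ (cellBot B F c d).map π)
    (hC : IsCornerCell B l F d c) : IsCornerCell B l (fun j ↦ (F j).map π) d c := by
  rw [hπ.isCornerCell_map_iff]
  refine ⟨(hπ.map_cellBot_le d c).trans hC.1, ?_⟩
  suffices ∃ x ∈ cellTop B F d c, B x e = 0 ∧ l x ≠ 0 by
    obtain ⟨x, hx, hxe, hlx⟩ := this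
    intro hle
    have hlπx : l (π x) = 0 := hle ⟨x, hx, rfl⟩
    rw [hlπ, hxe, sub_zero] at hlπx
    exact hlx hlπx
  obtain ⟨x, hx, hlx⟩ := hC.exists_functional_eq_one
  by_cases hxe : B x e = 0
  · exact ⟨x, hx, hxe, hlx ▸ one_ne_zero⟩
  have hrd : r ≤ d := not_lt.1 fun hdr ↦
    hxe ((hB x e).trans (apply_eq_zero_of_mem_cellTop hF h.left_mem hx.1 hdr))
  have hcq : c ≤ q := not_lt.1 fun hqc ↦
    hxe (apply_eq_zero_of_mem_cellTop hF hx h.left_mem.1 hqc)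
  obtain ⟨rfl, rfl⟩ : r = d ∧ c = q := by
    by_contra hne
    have hlf : l f = 0 := hC.1 (cellTop_le_cellBot hF hrd hcq (by omega) h.right_mem)
    exact one_ne_zero (h.functional_right.symm.trans hlf)
  refine h.survives_or_exhausts.resolve_right fun exhausts ↦ hcell ?_
  rintro _ ⟨y, hy, rfl⟩
  exact ⟨π y, exhausts _ (hπ.map_cellTop_le _ _ ⟨y, hy, rfl⟩) (hπf y), hπ.idem y⟩

lemma IsCornerPair.exists_block (h : IsCornerPair B l F q r e f) (hF : Monotone F)
    (hB : ∀ u v, B u v = B v u) (hl : ∀ v, B v v = l v ^ 2) (hqr : q ≤ r) (hC : C r q) :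
    ∃ D : NormalSystem B C, Nonempty D.Index ∧ D.Fits F ∧
      (∀ x, l (D.compl x) = l x - B x e) ∧ ∀ x, B (D.compl x) f = 0 := by
  have hff : B f f = 1 := by rw [hl, h.functional_right, one_pow]
  rcases hqr.lt_or_eq with hqr' | rfl
  · have hle : l e = 0 := functional_eq_zero_of_mem_cellTop hF hl hqr' h.left_mem
    let D : NormalSystem B C := .plane e f q r hqr (fun _ ↦ hqr') (by simp [hl, hle]) h.pairing
      (by simp [hff, hC])
    refine ⟨D, ⟨.inl ()⟩, NormalSystem.fits_plane _ _ _ _ _ h.left_mem h.right_mem, fun x ↦ ?_,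
      fun x ↦ D.apply_compl_vec hB x (.inr (.inl ()))⟩
    rw [NormalSystem.functional_compl_plane _ _ _ _ _ hle, h.functional_right, mul_one]
  · obtain rfl := h.eq_of_eq rfl
    let D : NormalSystem B C := .line e q hC hff
    refine ⟨D, ⟨.inr (.inr ())⟩, NormalSystem.fits_line _ _ h.left_mem, fun x ↦ ?_,
      fun x ↦ D.apply_compl_vec hB x (.inr (.inr ()))⟩
    rw [NormalSystem.functional_compl_line, h.functional_right, mul_one]

variable [FiniteDimensional K V]

lemma exists_isCornerPair_of_ne (hB : ∀ u v, B u v = B v u)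
    (hnd : ∀ v, (∀ w, B v w = 0) → v = 0) (hF : Monotone F) (hqr : q ≠ r)
    (hcell : ¬ cellTop B F q r ≤ cellBot B F q r) (hC : IsCornerCell B l F r q) :
    ∃ e f, IsCornerPair B l F q r e f := by
  obtain ⟨f, hf, hlf⟩ := hC.exists_functional_eq_one
  by_cases h : ∃ e ∈ cellTop B F q r, e ∉ cellBot B F q r ∧ B e f = 0
  · obtain ⟨e, he, he_bot, hef⟩ := h
    obtain ⟨g, hg, heg⟩ := exists_pairing_eq_one hB hnd hF he he_bot
    exact ⟨e, g + (1 - l g) • f, {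
      left_mem := he
      right_mem := Submodule.add_mem _ hg (Submodule.smul_mem _ _ hf)
      pairing := by simp [heg, hef]
      functional_right := by simp [hlf]
      eq_of_eq := fun hqr' ↦ (hqr hqr').elim
      survives_or_exhausts := .inl ⟨f, hf, (hB f e).trans hef, hlf ▸ one_ne_zero⟩ }⟩
  · push Not at h
    obtain ⟨e, he, he_bot⟩ := SetLike.not_le_iff_exists.1 hcell
    exact ⟨(B e f)⁻¹ • e, f, {
      left_mem := Submodule.smul_mem _ _ he
      right_mem := hf
      pairing := by simp [h e he he_bot]
      functional_right := hlf
      eq_of_eq := fun hqr' ↦ (hqr hqr').elim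
      survives_or_exhausts := .inr fun x hx hxf ↦ not_not.1 fun hx_bot ↦ h x hx hx_bot hxf }⟩

lemma exists_isCornerPair_diagonal (hB : ∀ u v, B u v = B v u)
    (hnd : ∀ v, (∀ w, B v w = 0) → v = 0) (hF : Monotone F) (hl : ∀ v, B v v = l v ^ 2)
    (hC : IsCornerCell B l F q q) : ∃ w, IsCornerPair B l F q q w w := by
  have isCornerPair {w : V} (hw : w ∈ cellTop B F q q) (hlw : l w = 1) :
      ((∃ x ∈ cellTop B F q q, B x w = 0 ∧ l x ≠ 0) ∨
        ∀ x ∈ cellTop B F q q, B x w = 0 → x ∈ cellBot B F q q) → IsCornerPair B l F q q w w :=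
    fun h ↦ ⟨hw, hw, by rw [hl, hlw, one_pow], hlw, fun _ ↦ rfl, h⟩
  obtain ⟨w, hw, hlw⟩ := hC.exists_functional_eq_one
  by_cases hsurv : ∃ x ∈ cellTop B F q q, B x w = 0 ∧ l x ≠ 0
  · exact ⟨w, isCornerPair hw hlw (.inl hsurv)⟩
  by_cases hexh : ∀ x ∈ cellTop B F q q, B x w = 0 → x ∈ cellBot B F q q
  · exact ⟨w, isCornerPair hw hlw (.inr hexh)⟩
  push Not at hsurv hexh
  have hww : B w w = 1 := by rw [hl, hlw, one_pow]
  obtain ⟨x, hx, hxw, hx_bot⟩ := hexh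
  obtain ⟨z, hz, hxz⟩ := exists_pairing_eq_one hB hnd hF hx hx_bot
  let y := z - B z w • w
  have hy : y ∈ cellTop B F q q := Submodule.sub_mem _ hz (Submodule.smul_mem _ _ hw)
  have hyw : B y w = 0 := by simp [y, hww]
  have hyx : B y x = 1 := by simp [y, hB z x, hB w x, hxz, hxw]
  -- Now `x, y` is a hyperbolic pair orthogonal to `w`; exchange `w` for `w + x`, which is
  -- orthogonal to `w - y`.
  refine ⟨w + x, isCornerPair (Submodule.add_mem _ hw hx) (by simp [hlw, hsurv x hx hxw])
    (.inl ⟨w - y, Submodule.sub_mem _ hw hy, ?_, by simp [hlw, hsurv y hy hyw]⟩)⟩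
  simp [hww, hyw, hyx, hB w x, hxw]

lemma exists_isCornerPair (hB : ∀ u v, B u v = B v u)
    (hnd : ∀ v, (∀ w, B v w = 0) → v = 0) (hF : Monotone F) (hl : ∀ v, B v v = l v ^ 2)
    (hcell : ¬ cellTop B F q r ≤ cellBot B F q r) (hC : IsCornerCell B l F r q) :
    ∃ e f, IsCornerPair B l F q r e f := by
  rcases eq_or_ne q r with rfl | hqr
  · obtain ⟨w, hw⟩ := exists_isCornerPair_diagonal hB hnd hF hl hC
    exact ⟨w, w, hw⟩
  · exact exists_isCornerPair_of_ne hB hnd hF hqr hcell hC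

lemma IsAdmissible.exists_block (hF : IsAdmissible B l N C F)
    (hB : ∀ u v, B u v = B v u) (hnd : ∀ v, (∀ w, B v w = 0) → v = 0)
    (hl : ∀ v, B v v = l v ^ 2) (hN : F N ≠ ⊥) :
    ∃ D : NormalSystem B C, Nonempty D.Index ∧ D.Fits F ∧
      IsAdmissible B l N C (fun j ↦ (F j).map D.compl) := by
  -- Splitting a plane off a non-corner cell is harmless. Once no such cell is left, all
  -- denominators of nonzero cells are isotropic, so a corner can only be lost in the cell of the
  -- split-off block itself.
  by_cases hall : ∀ q r, q ≤ r → ¬ cellTop B F q r ≤ cellBot B F q r → IsCornerCell B l F r q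
  · obtain ⟨q, r, hqr, hcell⟩ := exists_nonzero_cell hF.bot hF.mono hF.disjoint_perp hN
    have hC : IsCornerCell B l F r q := hall q r hqr hcell
    obtain ⟨e, f, hef⟩ := exists_isCornerPair hB hnd hF.mono hl hcell hC
    obtain ⟨D, hne, fits, hlD, hDf⟩ :=
      hef.exists_block hF.mono hB hl hqr ((hF.isCornerCell_iff q r hqr hcell).1 hC)
    have projection := fits.isFlagProjection_compl hF.mono hB
    refine ⟨D, hne, fits, projection.isAdmissible_map hF fun c d hcd hcell' ↦ ?_⟩
    have hC' : IsCornerCell B l F d c := hall c d hcd fun hle ↦ hcell' (Submodule.map_mono hle)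
    exact iff_of_true (hef.isCornerCell_map hB hF.mono projection hlD hDf hcell' hC') hC'
  · push Not at hall
    obtain ⟨q, r, hqr, hcell, hC⟩ := hall
    exact hF.exists_block_of_not_isCornerCell hB hnd hl hqr hcell hC

lemma IsAdmissible.exists_flag_eq (hF : IsAdmissible B l N C F) (hB : ∀ u v, B u v = B v u)
    (hnd : ∀ v, (∀ w, B v w = 0) → v = 0) (hl : ∀ v, B v v = l v ^ 2) :
    ∃ D : NormalSystem B C, D.flag = F := by
  induction hn : finrank K (F N) using Nat.strong_induction_on generalizing F with
  | _ n ih =>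
    by_cases hN : F N = ⊥
    · refine ⟨.empty B C, funext fun j ↦ ?_⟩
      rw [NormalSystem.flag_empty, eq_comm, eq_bot_iff, ← hN]
      exact hF.le_top j
    obtain ⟨D, hne, fits, hF'⟩ := hF.exists_block hB hnd hl hN
    have finrank_lt : finrank K ((F N).map D.compl) < n :=
      hn ▸ Submodule.finrank_lt_finrank_of_lt (fits.map_compl_lt hF.mono hF.le_top hB)
    obtain ⟨D', hD'⟩ := ih _ finrank_lt hF' rfl
    have orthogonal i j : B (D.vec i) (D'.vec j) = 0 := by
      obtain ⟨x, -, hx⟩ : D'.vec j ∈ (F (D'.deg j)).map D.compl :=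
        congrFun hD' (D'.deg j) ▸ D'.vec_mem_flag le_rfl
      rw [hB, ← hx, D.apply_compl_vec hB]
    refine ⟨.sum D D' hB orthogonal, funext fun j ↦ ?_⟩
    rw [NormalSystem.flag_sum, hD', fits.flag_sup_map_compl hF.mono hB]

end Corner

end Splitting

section Counting

variable {K V : Type*} [Field K] [AddCommGroup V] [Module K V]

open Finset in
lemma finrank_span_image_quotient {ι : Type*} [DecidableEq ι] {v : ι → V}
    (hv : LinearIndependent K v) {S T : Finset ι} (hTS : T ⊆ S) :
    finrank K (Submodule.span K (v '' S) ⧸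
      (Submodule.span K (v '' T)).comap (Submodule.span K (v '' S)).subtype) = #(S \ T) := by
  have finrank_span (U : Finset ι) : finrank K (Submodule.span K (v '' U)) = #U := by
    rw [Set.image_eq_range]
    exact (finrank_span_eq_card (hv.comp _ Subtype.val_injective)).trans (Fintype.card_coe U)
  have : FiniteDimensional K (Submodule.span K (v '' S)) :=
    .span_of_finite K (S.finite_toSet.image v)
  have span_le : Submodule.span K (v '' T) ≤ Submodule.span K (v '' S) :=
    Submodule.span_mono (Set.image_mono hTS)
  rw [Submodule.finrank_quotient, (Submodule.comapSubtypeEquivOfLe span_le).finrank_eq,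
    finrank_span, finrank_span, card_sdiff_of_subset hTS]

open scoped Classical in
lemma finrank_quotient_sub_finrank_map_ker [FiniteDimensional K V] (Y : Submodule K V)
    (φ : V →ₗ[K] K) :
    finrank K (V ⧸ Y) - finrank K ((LinearMap.ker φ).map Y.mkQ) =
      if Y ≤ LinearMap.ker φ ∧ φ ≠ 0 then 1 else 0 := by
  split_ifs with h
  · obtain ⟨hY, hφ⟩ := h
    have liftQ_ne_zero : Y.liftQ φ hY ≠ 0 := fun h0 ↦ hφ (by rw [← Y.liftQ_mkQ φ hY, h0]; rfl)
    have := Module.Dual.finrank_ker_add_one_of_ne_zero liftQ_ne_zero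
    rw [Submodule.ker_liftQ] at this
    omega
  · suffices Y ⊔ LinearMap.ker φ = ⊤ by
      rw [(Submodule.map_mkQ_eq_top Y _).2 this, finrank_top, Nat.sub_self]
    by_cases hφ : φ = 0
    · rw [hφ, LinearMap.ker_zero, sup_top_eq]
    · have isCoatom_ker := LinearMap.isCoatom_ker_of_surjective (LinearMap.surjective hφ)
      exact (isCoatom_ker.not_le_iff_codisjoint.1 fun hY ↦ h ⟨hY, hφ⟩).symm.eq_top

open scoped Classical in
lemma nqr1_ker [FiniteDimensional K V] {B : V →ₗ[K] V →ₗ[K] K} {F : ℕ → Submodule K V}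
    (hF : Monotone F) (l : V →ₗ[K] K) (a b : ℕ) :
    nqr1 B F (LinearMap.ker l) a b = if IsCornerCell B l F a b then 1 else 0 := by
  refine (finrank_quotient_sub_finrank_map_ker
    ((cellBot B F a b).comap (cellTop B F a b).subtype) (l.domRestrict _)).trans ?_
  refine if_congr (and_congr ⟨fun h y hy ↦ ?_, fun h y hy ↦ h hy⟩ (not_congr ?_)) rfl rfl
  · exact h (x := ⟨y, cellBot_le_cellTop hF hy⟩) hy
  · exact LinearMap.ext_iff.trans Subtype.forall

namespace NormalSystem

open Finset

variable {B : V →ₗ[K] V →ₗ[K] K} {C : ℕ → ℕ → Prop}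

lemma apply_dualVec_eq_zero (D : NormalSystem B C) (hB : ∀ u v, B u v = B v u) {x : V} {j : ℕ}
    (hx : x ∈ D.flag j) {i : D.Index} (hij : j < D.deg i) : B x (D.dualVec i) = 0 := by
  classical
  suffices D.flag j ≤ LinearMap.ker (B.flip (D.dualVec i)) from this hx
  rw [flag, Submodule.span_le]
  rintro _ ⟨i', hi', rfl⟩
  have hne : i' ≠ i := by
    rintro rfl
    exact hij.not_ge hi'
  exact (D.apply_vec_dualVec hB i' i).trans (if_neg hne)

lemma compl_eq_zero_of_mem_flag (D : NormalSystem B C) (hB : ∀ u v, B u v = B v u) {x : V} {j : ℕ}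
    (hx : x ∈ D.flag j) : D.compl x = 0 := by
  suffices D.flag j ≤ LinearMap.ker D.compl from this hx
  rw [flag, Submodule.span_le]
  rintro _ ⟨i, -, rfl⟩
  exact D.compl_vec hB i

lemma flag_inf_perp (D : NormalSystem B C) (hB : ∀ u v, B u v = B v u) (a c : ℕ) :
    D.flag a ⊓ perp B (D.flag c) =
      Submodule.span K (D.vec '' {i | D.deg i ≤ a ∧ c < D.codeg i}) := by
  classical
  apply le_antisymm
  · rintro x ⟨hx, hx_perp⟩
    rw [← sub_zero x, ← D.compl_eq_zero_of_mem_flag hB hx, compl_apply, sub_sub_cancel]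
    refine Submodule.sum_mem _ fun i _ ↦ ?_
    by_cases hi : D.deg i ≤ a ∧ c < D.codeg i
    · exact Submodule.smul_mem _ _ (Submodule.subset_span ⟨i, hi, rfl⟩)
    · have : B x (D.dualVec i) = 0 := by
        by_cases hia : D.deg i ≤ a
        · exact D.mem_perp_flag_iff_dualVec.1 hx_perp i (not_lt.1 fun hci ↦ hi ⟨hia, hci⟩)
        · exact D.apply_dualVec_eq_zero hB hx (not_le.1 hia)
      rw [this, zero_smul]
      exact Submodule.zero_mem _
  · rw [Submodule.span_le]
    rintro _ ⟨i, ⟨hia, hci⟩, rfl⟩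
    refine ⟨D.vec_mem_flag hia, D.mem_perp_flag_iff_dualVec.2 fun i' hi' ↦ ?_⟩
    have hne : i ≠ i' := by
      rintro rfl
      exact hci.not_ge hi'
    rw [D.apply_vec_dualVec hB, if_neg hne]

lemma nqr_eq_card (D : NormalSystem B C) {F : ℕ → Submodule K V} (hD : D.flag = F)
    (hB : ∀ u v, B u v = B v u) {q r : ℕ} (hq : 1 ≤ q) (hr : 1 ≤ r) :
    nqr B F q r = #{i | D.deg i = q ∧ D.codeg i = r} := by
  classical
  subst hD
  let S : Finset D.Index := {i | D.deg i ≤ q ∧ r - 1 < D.codeg i}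
  let T : Finset D.Index :=
    {i | D.deg i ≤ q ∧ r < D.codeg i ∨ D.deg i ≤ q - 1 ∧ r - 1 < D.codeg i}
  have hS : D.flag q ⊓ perp B (D.flag (r - 1)) = Submodule.span K (D.vec '' S) := by
    rw [D.flag_inf_perp hB, Finset.coe_filter_univ]
  have hT : D.flag q ⊓ perp B (D.flag r) ⊔ D.flag (q - 1) ⊓ perp B (D.flag (r - 1)) =
      Submodule.span K (D.vec '' T) := by
    rw [D.flag_inf_perp hB, D.flag_inf_perp hB, ← Submodule.span_union, ← Set.image_union,
      Finset.coe_filter_univ, Set.ofPred_or]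
  have hTS : T ⊆ S := fun i ↦ by
    simp only [S, T, mem_filter_univ]
    omega
  rw [nqr, hS, hT, finrank_span_image_quotient (D.linearIndependent_vec hB) hTS]
  congr 1
  ext i
  simp only [S, T, mem_sdiff, mem_filter_univ]
  omega

lemma deg_mem_Icc (D : NormalSystem B C) (hB : ∀ u v, B u v = B v u) {N : ℕ}
    (hbot : D.flag 0 = ⊥) (htop : D.flag N = ⊤) (i : D.Index) : D.deg i ∈ Icc 1 N := by
  classical
  refine mem_Icc.2 ⟨Nat.one_le_iff_ne_zero.2 fun h0 ↦ ?_, not_lt.1 fun hN ↦ ?_⟩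
  · refine (D.linearIndependent_vec hB).ne_zero i ((Submodule.mem_bot K).1 ?_)
    exact hbot ▸ D.vec_mem_flag h0.le
  · have hzero := D.apply_dualVec_eq_zero hB (htop ▸ Submodule.mem_top (x := D.vec i)) hN
    rw [D.apply_vec_dualVec hB, if_pos rfl] at hzero
    exact one_ne_zero hzero

lemma card_deg_codeg_of_lt (D : NormalSystem B C) {a b : ℕ} (hab : a < b) :
    #{i | D.deg i = a ∧ D.codeg i = b} = #{p | D.q p = a ∧ D.r p = b} := by
  refine (congrArg card (Finset.ext fun i ↦ ?_)).trans (card_map .inl)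
  rw [mem_filter_univ, mem_map]
  rcases i with p | p | s
  · simp [deg, codeg]
  · have := D.q_le_r p
    simp [deg, codeg]
    omega
  · simp [deg, codeg]
    omega

lemma card_deg_codeg_self (D : NormalSystem B C) {a : ℕ} (ha : C a a) :
    #{i | D.deg i = a ∧ D.codeg i = a} = #{s | D.c s = a} := by
  have not_plane (p) (hq : D.q p = a) : D.r p ≠ a := fun hr ↦
    (D.q_lt_r p (by rwa [hq, hr])).ne (hq.trans hr.symm)
  refine (congrArg card (Finset.ext fun i ↦ ?_)).trans (card_map (.trans .inr .inr))
  rw [mem_filter_univ, mem_map]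
  rcases i with p | p | s
  · simpa [deg, codeg] using not_plane p
  · simpa [deg, codeg] using fun hr hq ↦ not_plane p hq hr
  · simp [deg, codeg]

open scoped Classical in
/-- The number of blocks `M₁`. -/
noncomputable def numCornerPlanes (D : NormalSystem B C) : ℕ := #{p | C (D.r p) (D.q p)}

open scoped Classical in
/-- The number of blocks `M₀`. -/
noncomputable def numHyperbolicPlanes (D : NormalSystem B C) : ℕ := #{p | ¬ C (D.r p) (D.q p)}

open scoped Classical in
lemma sum_card_mul_corner_of_lt (D : NormalSystem B C) {N : ℕ} (hN : ∀ i, D.deg i ∈ Icc 1 N) :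
    ∑ q ∈ Icc 1 N, ∑ r ∈ Icc (q + 1) N,
      #{i | D.deg i = q ∧ D.codeg i = r} * (if C r q then 1 else 0) = D.numCornerPlanes := by
  rw [numCornerPlanes, sum_sigma', card_eq_sum_card_fiberwise
    (f := fun p ↦ (⟨D.q p, D.r p⟩ : (_ : ℕ) × ℕ)) (t := (Icc 1 N).sigma fun q ↦ Icc (q + 1) N)]
  · refine sum_congr rfl fun ⟨q, r⟩ hqr ↦ ?_
    rw [D.card_deg_codeg_of_lt (mem_Icc.1 (mem_sigma.1 hqr).2).1, filter_filter]
    split_ifs with hC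
    · rw [mul_one]
      congr 1
      ext p
      simp only [mem_filter_univ, Sigma.mk.injEq, heq_eq_eq]
      constructor
      · rintro ⟨rfl, rfl⟩
        exact ⟨hC, rfl, rfl⟩
      · exact And.right
    · rw [mul_zero, eq_comm, card_eq_zero, filter_eq_empty_iff]
      rintro p - ⟨hp, hpqr⟩
      obtain ⟨rfl, rfl⟩ := Sigma.mk.inj_iff.1 hpqr
      exact hC hp
  · intro p hp
    exact mem_sigma.2 ⟨hN (.inl p), mem_Icc.2
      ⟨D.q_lt_r p ((mem_filter_univ p).1 hp), (mem_Icc.1 (hN (.inr (.inl p)))).2⟩⟩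

open scoped Classical in
lemma sum_card_mul_corner_self (D : NormalSystem B C) {N : ℕ} (hN : ∀ i, D.deg i ∈ Icc 1 N) :
    ∑ q ∈ Icc 1 N, #{i | D.deg i = q ∧ D.codeg i = q} * (if C q q then 1 else 0) =
      Fintype.card D.Line := by
  rw [← card_univ, card_eq_sum_card_fiberwise (f := D.c) (t := Icc 1 N)
    fun s _ ↦ hN (.inr (.inr s))]
  refine sum_congr rfl fun q _ ↦ ?_
  split_ifs with hC
  · rw [D.card_deg_codeg_self hC, mul_one]
  · rw [mul_zero, eq_comm, card_eq_zero, filter_eq_empty_iff]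
    rintro s - rfl
    exact hC (D.corner_c s)

end NormalSystem

end Counting

section Assembly

lemma exists_equiv_fin_add {P : Type*} [Fintype P] (Q : P → Prop) [DecidablePred Q] {k t : ℕ}
    (hk : Finset.card {p | ¬ Q p} = k) (ht : Finset.card {p | Q p} = t) :
    ∃ σ : P ≃ Fin (k + t), ∀ p, Q p ↔ k ≤ σ p := by
  rw [← Fintype.card_subtype] at hk ht
  refine ⟨(Equiv.sumCompl Q).symm.trans ((Equiv.sumComm _ _).trans
    (((Fintype.equivFinOfCardEq hk).sumCongr (Fintype.equivFinOfCardEq ht)).trans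
      finSumFinEquiv)), fun p ↦ ?_⟩
  by_cases hp : Q p
  · simp [hp, Equiv.sumCompl_symm_apply_of_pos]
  · simp [hp, Equiv.sumCompl_symm_apply_of_neg]

lemma exists_interleaving {P L : Type*} {m s n : ℕ} (σ : P ≃ Fin m) (τ : L ≃ Fin s)
    (hn : 2 * m + s = n) :
    ∃ ε : P ⊕ P ⊕ L ≃ Fin n, (∀ p, (ε (.inl p) : ℕ) = 2 * σ p) ∧
      (∀ p, (ε (.inr (.inl p)) : ℕ) = 2 * σ p + 1) ∧
      ∀ x, (ε (.inr (.inr x)) : ℕ) = 2 * m + τ x := by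
  let ε : P ⊕ P ⊕ L → Fin n := Sum.elim (fun p ↦ ⟨2 * σ p, by omega⟩)
    (Sum.elim (fun p ↦ ⟨2 * σ p + 1, by omega⟩) (fun x ↦ ⟨2 * m + τ x, by omega⟩))
  have injective : Function.Injective ε := by
    rintro (p | p | x) (p' | p' | x') h <;>
      simp only [ε, Sum.elim_inl, Sum.elim_inr, Fin.mk.injEq] at h <;> try omega
    all_goals
      congr 2
      first
      | exact σ.injective (Fin.ext (by omega))
      | exact τ.injective (Fin.ext (by omega))
  have := Fintype.ofEquiv _ σ.symm
  have := Fintype.ofEquiv _ τ.symm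
  have bijective : Function.Bijective ε := by
    rw [Fintype.bijective_iff_injective_and_card]
    refine ⟨injective, ?_⟩
    simp only [Fintype.card_sum, Fintype.card_congr σ, Fintype.card_congr τ, Fintype.card_fin]
    omega
  exact ⟨.ofBijective ε bijective, fun _ ↦ rfl, fun _ ↦ rfl, fun _ ↦ rfl⟩

namespace NormalSystem

open Finset

variable {K V : Type*} [Field K] [AddCommGroup V] [Module K V] {B : V →ₗ[K] V →ₗ[K] K}
  {C : ℕ → ℕ → Prop}

lemma apply_vec_vec (D : NormalSystem B C) (hB : ∀ u v, B u v = B v u) {k t s n : ℕ}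
    (σ : D.Plane ≃ Fin (k + t)) (hσ : ∀ p, C (D.r p) (D.q p) ↔ k ≤ σ p) (τ : D.Line ≃ Fin s)
    (ε : D.Index ≃ Fin n) (hεe : ∀ p, (ε (.inl p) : ℕ) = 2 * σ p)
    (hεf : ∀ p, (ε (.inr (.inl p)) : ℕ) = 2 * σ p + 1)
    (hεg : ∀ x, (ε (.inr (.inr x)) : ℕ) = 2 * (k + t) + τ x) (i j : D.Index) :
    B (D.vec i) (D.vec j) = gramPattern K k t (ε i) (ε j) := by
  classical
  have fe (p p') : B (D.f p) (D.e p') = if p' = p then 1 else 0 := by rw [hB, D.ef]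
  have ge (s p) : B (D.g s) (D.e p) = 0 := by rw [hB, D.eg]
  have gf (s p) : B (D.g s) (D.f p) = 0 := by rw [hB, D.fg]
  have plane_eq_iff (p p') : p = p' ↔ (σ p : ℕ) = σ p' := by
    rw [Fin.val_inj, σ.injective.eq_iff]
  have line_eq_iff (x x') : x = x' ↔ (τ x : ℕ) = τ x' := by
    rw [Fin.val_inj, τ.injective.eq_iff]
  rcases i with p | p | x <;> rcases j with p' | p' | x' <;>
    simp only [gramPattern, Fin.ext_iff, hεe, hεf, hεg, vec, Sum.elim_inl, Sum.elim_inr, D.ee, D.ef,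
      D.eg, fe, D.ff, D.fg, ge, gf, D.gg, hσ, plane_eq_iff, line_eq_iff] <;>
    split_ifs <;> first | rfl | omega

lemma flag_eq_span_range_inter (D : NormalSystem B C) (j : ℕ) :
    D.flag j = Submodule.span K (Set.range D.vec ∩ D.flag j) := by
  refine le_antisymm (Submodule.span_mono ?_) (Submodule.span_le.2 Set.inter_subset_right)
  rintro _ ⟨i, hi, rfl⟩
  exact ⟨⟨i, rfl⟩, D.vec_mem_flag hi⟩

lemma exists_basis (D : NormalSystem B C) {F : ℕ → Submodule K V} (hD : D.flag = F)
    (hB : ∀ u v, B u v = B v u) {N : ℕ} (htop : F N = ⊤) :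
    2 * D.numHyperbolicPlanes + 2 * D.numCornerPlanes + Fintype.card D.Line = finrank K V ∧
    ∃ e : Basis (Fin (finrank K V)) K V,
      (∀ j, F j = Submodule.span K (Set.range e ∩ F j)) ∧
      ∀ i j, B (e i) (e j) = gramPattern K D.numHyperbolicPlanes D.numCornerPlanes i j := by
  classical
  subst hD
  have span_vec : ⊤ ≤ Submodule.span K (Set.range D.vec) :=
    htop ▸ Submodule.span_mono (Set.image_subset_range _ _)
  let b : Basis D.Index K V := .mk (D.linearIndependent_vec hB) span_vec
  obtain ⟨σ, hσ⟩ : ∃ σ : D.Plane ≃ Fin (D.numHyperbolicPlanes + D.numCornerPlanes),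
      ∀ p, C (D.r p) (D.q p) ↔ D.numHyperbolicPlanes ≤ σ p :=
    exists_equiv_fin_add _ rfl rfl
  have card_eq : 2 * (D.numHyperbolicPlanes + D.numCornerPlanes) + Fintype.card D.Line =
      finrank K V := by
    rw [finrank_eq_card_basis b, Fintype.card_sum, Fintype.card_sum, Fintype.card_congr σ,
      Fintype.card_fin, two_mul, add_assoc]
  obtain ⟨ε, hεe, hεf, hεg⟩ := exists_interleaving σ (Fintype.equivFin D.Line) card_eq
  refine ⟨by rw [← card_eq, mul_add], b.reindex ε, fun j ↦ ?_, fun i j ↦ ?_⟩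
  · rw [Basis.range_reindex, Basis.coe_mk]
    exact D.flag_eq_span_range_inter j
  · rw [Basis.reindex_apply, Basis.reindex_apply, Basis.mk_apply, Basis.mk_apply,
      D.apply_vec_vec hB σ hσ _ ε hεe hεf hεg, ε.apply_symm_apply, ε.apply_symm_apply]

end NormalSystem

end Assembly

theorem statement10_general {K V : Type*} [Field K] [AddCommGroup V] [Module K V]
    [FiniteDimensional K V]
    (B : V →ₗ[K] V →ₗ[K] K)
    (hsymm : ∀ u v : V, B u v = B v u)
    (hnd : ∀ v : V, (∀ w : V, B v w = 0) → v = 0)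
    (l : V →ₗ[K] K) (hl : ∀ v : V, B v v = l v ^ 2)
    (Vf : ℕ → Submodule K V) (hbot : Vf 0 = ⊥) (hmono : Monotone Vf)
    (N : ℕ) (hN : Vf N = ⊤) :
    ∃ k t s : ℕ,
      2 * k + 2 * t + s = finrank K V ∧
      t = ∑ q ∈ Finset.Icc 1 N, ∑ r ∈ Finset.Icc (q + 1) N,
            nqr B Vf q r * nqr1 B Vf (LinearMap.ker l) r q ∧
      s = ∑ q ∈ Finset.Icc 1 N, nqr B Vf q q * nqr1 B Vf (LinearMap.ker l) q q ∧
      ∃ e : Basis (Fin (finrank K V)) K V,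
        (∀ j : ℕ, Vf j = Submodule.span K (Set.range e ∩ ↑(Vf j))) ∧
        ∀ i j : Fin (finrank K V), B (e i) (e j) = gramPattern K k t i j := by
  classical
  have admissible : IsAdmissible B l N (IsCornerCell B l Vf) Vf :=
    .of_eq_top hbot hmono hN hnd
  obtain ⟨D, hD⟩ := admissible.exists_flag_eq hsymm hnd hl
  have deg_mem := D.deg_mem_Icc hsymm (by rw [hD, hbot]) (by rw [hD, hN])
  obtain ⟨card_eq, basis⟩ := D.exists_basis hD hsymm hN
  refine ⟨_, _, _, card_eq, ?_, ?_, basis⟩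
  · rw [← D.sum_card_mul_corner_of_lt deg_mem]
    refine Finset.sum_congr rfl fun q hq ↦ Finset.sum_congr rfl fun r hr ↦ ?_
    rw [Finset.mem_Icc] at hq hr
    rw [D.nqr_eq_card hD hsymm hq.1 (by omega), nqr1_ker hmono]
  · rw [← D.sum_card_mul_corner_self deg_mem]
    refine Finset.sum_congr rfl fun q hq ↦ ?_
    rw [Finset.mem_Icc] at hq
    rw [D.nqr_eq_card hD hsymm hq.1 hq.1, nqr1_ker hmono]

/-- Theorem 1.1(1): there is a basis of V coordinated with the
flag whose Gram matrix is diag(M₀,…,M₀,M₁,…,M₁,1ₛ), where the number of blocks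
M₁ equals Σ_{q<r} n_qr·n_rq^1 and s = Σ_q n_qq·n_qq^1. -/
theorem statement10 {K V : Type*} [Field K] [AddCommGroup V] [Module K V]
    [FiniteDimensional K V] [CharP K 2] [PerfectField K]
    (B : V →ₗ[K] V →ₗ[K] K)
    (hsymm : ∀ u v : V, B u v = B v u)
    (hnd : ∀ v : V, (∀ w : V, B v w = 0) → v = 0)
    (hna : ∃ v : V, B v v ≠ 0)
    (Vf : ℕ → Submodule K V) (hbot : Vf 0 = ⊥) (hmono : Monotone Vf)
    (N : ℕ) (hN : ∀ q, N ≤ q → Vf q = ⊤)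
    (V0 : Submodule K V) (hV0 : ∀ v : V, v ∈ V0 ↔ B v v = 0) :
    ∃ k t s : ℕ,
      2 * k + 2 * t + s = finrank K V ∧
      t = ∑ q ∈ Finset.Icc 1 N, ∑ r ∈ Finset.Icc (q + 1) N,
            nqr B Vf q r * nqr1 B Vf V0 r q ∧
      s = ∑ q ∈ Finset.Icc 1 N, nqr B Vf q q * nqr1 B Vf V0 q q ∧
      ∃ e : Basis (Fin (finrank K V)) K V,
        (∀ j : ℕ, Vf j = Submodule.span K (Set.range e ∩ ↑(Vf j))) ∧
        ∀ i j : Fin (finrank K V), B (e i) (e j) = gramPattern K k t i j := by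
  obtain ⟨l, hl⟩ := exists_linear_sq_eq hsymm
  obtain rfl : V0 = LinearMap.ker l := by
    ext v
    rw [hV0, hl, LinearMap.mem_ker, pow_eq_zero_iff two_ne_zero]
  exact statement10_general B hsymm hnd l hl Vf hbot hmono N (hN N le_rfl)
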